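/- arXiv:1601.02717 — 3 statements merged into one kernel-verified Lean document; each statement's English description precedes it below -/
import Mathlib

section
/- Let u ∈ L²(Ω̄), let 0 < t ≤ 1, and set ϱ = |Ω_I|/|Ω̄|. If 0 ≤ ε ≤ (1−t)√ϱ / (1 + √(1−ϱ)) and |∫_{Ω_I} u(x) dx| ≤ ε·|Ω_I|^{1/2}·‖u‖_{L²(Ω_I)}, then |Ω̄|^{-1/2}·|∫_{Ω̄} u(x) dx| ≤ (1 − tϱ/(1 + √(1−ϱ)))·‖u‖_{L²(Ω̄)}. -/
open MeasureTheory

/-- The `L²` norm of `u` over the set `D`. -/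
noncomputable def l2norm {n : ℕ} (D : Set (EuclideanSpace ℝ (Fin n)))
    (u : EuclideanSpace ℝ (Fin n) → ℝ) : ℝ :=
  Real.sqrt (∫ x in D, u x ^ 2)

/-!
Splitting `∫_{Ω̄} u` over `Ω` and `Ω_I`, Cauchy–Schwarz on `Ω` and the hypothesis on `Ω_I` give
`|Ω̄|^{-1/2} |∫_{Ω̄} u| ≤ √(1 - ϱ) ‖u‖_{L²(Ω)} + ε √ϱ ‖u‖_{L²(Ω_I)}`. Both norms are at most
`‖u‖_{L²(Ω̄)}`, and since `ϱ / (1 + √(1 - ϱ)) = 1 - √(1 - ϱ)`, the bound on `ε` says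
`ε √ϱ ≤ (1 - t) (1 - √(1 - ϱ))`, so the coefficients add up to at most `1 - t (1 - √(1 - ϱ))`.
-/

section LpNorm

open scoped ENNReal

variable {α E : Type*} [MeasurableSpace α] [NormedAddCommGroup E] {μ ν : Measure α} {f : α → E}

theorem lpNorm_mono_measure {p : ℝ≥0∞} (hf : MemLp f p μ) (hνμ : ν ≤ μ) :
    lpNorm f p ν ≤ lpNorm f p μ := by
  rw [← toReal_eLpNorm hf.aestronglyMeasurable,
    ← toReal_eLpNorm (hf.aestronglyMeasurable.mono_measure hνμ)]
  exact ENNReal.toReal_mono hf.eLpNorm_ne_top (eLpNorm_mono_measure f hνμ)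

theorem lpNorm_restrict_mono {p : ℝ≥0∞} {s t : Set α} (hst : s ⊆ t)
    (hf : MemLp f p (μ.restrict t)) : lpNorm f p (μ.restrict s) ≤ lpNorm f p (μ.restrict t) :=
  lpNorm_mono_measure hf (Measure.restrict_mono_set μ hst)

theorem lpNorm_two_eq_sqrt_integral_norm_sq (hf : AEStronglyMeasurable f μ) :
    lpNorm f 2 μ = √(∫ x, ‖f x‖ ^ 2 ∂μ) := by
  simp [lpNorm_eq_integral_norm_rpow_toReal two_ne_zero ENNReal.ofNat_ne_top hf,
    Real.sqrt_eq_rpow]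

variable [NormedSpace ℝ E]

-- At `p = ∞` the exponent is `1`, as it should be, because `1 / (∞ : ℝ≥0∞).toReal = 1 / 0 = 0`.
theorem norm_integral_le_measureReal_univ_rpow_mul_lpNorm [IsFiniteMeasure μ] {p : ℝ≥0∞}
    (hp : 1 ≤ p) (hf : MemLp f p μ) :
    ‖∫ x, f x ∂μ‖ ≤ μ.real Set.univ ^ (1 - 1 / p.toReal) * lpNorm f p μ := by
  have exponent_nonneg : 0 ≤ 1 - 1 / p.toReal := by
    obtain rfl | hp_top := eq_or_ne p ∞
    · simp
    · have one_le_toReal : 1 ≤ p.toReal := by simpa using ENNReal.toReal_mono hp_top hp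
      exact sub_nonneg.2 (div_le_one_of_le₀ one_le_toReal (by positivity))
  have holder : eLpNorm f 1 μ ≤ eLpNorm f p μ * μ Set.univ ^ (1 - 1 / p.toReal) := by
    simpa using eLpNorm_le_eLpNorm_mul_rpow_measure_univ hp hf.aestronglyMeasurable
  calc ‖∫ x, f x ∂μ‖ ≤ ∫ x, ‖f x‖ ∂μ := norm_integral_le_integral_norm f
    _ = (eLpNorm f 1 μ).toReal := by
      rw [toReal_eLpNorm hf.aestronglyMeasurable,
        lpNorm_one_eq_integral_norm hf.aestronglyMeasurable]
    _ ≤ (eLpNorm f p μ * μ Set.univ ^ (1 - 1 / p.toReal)).toReal :=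
      ENNReal.toReal_mono (ENNReal.mul_ne_top hf.eLpNorm_ne_top
        (ENNReal.rpow_ne_top_of_nonneg exponent_nonneg (measure_ne_top μ _))) holder
    _ = μ.real Set.univ ^ (1 - 1 / p.toReal) * lpNorm f p μ := by
      rw [ENNReal.toReal_mul, ← ENNReal.toReal_rpow, toReal_eLpNorm hf.aestronglyMeasurable,
        mul_comm, measureReal_def]

theorem norm_setIntegral_le_sqrt_measureReal_mul_lpNorm {s : Set α} (hs : μ s ≠ ∞)
    (hf : MemLp f 2 (μ.restrict s)) :
    ‖∫ x in s, f x ∂μ‖ ≤ √(μ.real s) * lpNorm f 2 (μ.restrict s) := by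
  have : IsFiniteMeasure (μ.restrict s) := isFiniteMeasure_restrict.2 hs
  have half : (1 - 1 / (2 : ℝ≥0∞).toReal : ℝ) = 1 / 2 := by norm_num
  simpa only [half, ← Real.sqrt_eq_rpow, measureReal_restrict_apply_univ] using
    norm_integral_le_measureReal_univ_rpow_mul_lpNorm one_le_two hf

theorem norm_setIntegral_union_le_sqrt_measureReal_mul_lpNorm_add {s t : Set α}
    (hst : AEDisjoint μ s t) (ht : NullMeasurableSet t μ) (hfin : μ (s ∪ t) ≠ ∞)
    (hf : MemLp f 2 (μ.restrict (s ∪ t))) :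
    ‖∫ x in s ∪ t, f x ∂μ‖ ≤
      √(μ.real s) * lpNorm f 2 (μ.restrict s) + ‖∫ x in t, f x ∂μ‖ := by
  have : IsFiniteMeasure (μ.restrict (s ∪ t)) := isFiniteMeasure_restrict.2 hfin
  have integrableOn_union : IntegrableOn f (s ∪ t) μ := hf.integrable one_le_two
  have memLp_left : MemLp f 2 (μ.restrict s) :=
    hf.mono_measure (Measure.restrict_mono_set μ Set.subset_union_left)
  rw [setIntegral_union₀ hst ht integrableOn_union.left_of_union integrableOn_union.right_of_union]
  grw [norm_add_le, norm_setIntegral_le_sqrt_measureReal_mul_lpNorm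
    (measure_ne_top_of_subset Set.subset_union_left hfin) memLp_left]

end LpNorm

theorem l2norm_eq_lpNorm {n : ℕ} {D : Set (EuclideanSpace ℝ (Fin n))}
    {u : EuclideanSpace ℝ (Fin n) → ℝ} (hu : AEStronglyMeasurable u (volume.restrict D)) :
    l2norm D u = lpNorm u 2 (volume.restrict D) := by
  simp only [l2norm, lpNorm_two_eq_sqrt_integral_norm_sq hu, Real.norm_eq_abs, sq_abs]

section Coefficients

variable {ϱ : ℝ}

theorem div_one_add_sqrt_one_sub (hϱ : ϱ ≤ 1) : ϱ / (1 + √(1 - ϱ)) = 1 - √(1 - ϱ) := by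
  have hsq : √(1 - ϱ) ^ 2 = 1 - ϱ := Real.sq_sqrt (sub_nonneg.2 hϱ)
  rw [div_eq_iff (by positivity)]
  linear_combination hsq

theorem mul_sqrt_le_of_le_div_one_add_sqrt_one_sub {ε c : ℝ} (hϱ0 : 0 ≤ ϱ) (hϱ1 : ϱ ≤ 1)
    (hε : ε ≤ c * √ϱ / (1 + √(1 - ϱ))) : ε * √ϱ ≤ c * (1 - √(1 - ϱ)) :=
  calc ε * √ϱ ≤ c * √ϱ / (1 + √(1 - ϱ)) * √ϱ := by gcongr
    _ = c * (√ϱ * √ϱ / (1 + √(1 - ϱ))) := by ring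
    _ = c * (1 - √(1 - ϱ)) := by rw [Real.mul_self_sqrt hϱ0, div_one_add_sqrt_one_sub hϱ1]

theorem sqrt_one_sub_mul_add_mul_sqrt_mul_le {ε t a b c : ℝ} (hϱ0 : 0 ≤ ϱ) (hϱ1 : ϱ ≤ 1)
    (ht : t ≤ 1) (hε : ε ≤ (1 - t) * √ϱ / (1 + √(1 - ϱ))) (hac : a ≤ c) (hb : 0 ≤ b)
    (hbc : b ≤ c) :
    √(1 - ϱ) * a + ε * √ϱ * b ≤ (1 - t * ϱ / (1 + √(1 - ϱ))) * c := by
  have hε_mul : ε * √ϱ ≤ (1 - t) * (1 - √(1 - ϱ)) :=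
    mul_sqrt_le_of_le_div_one_add_sqrt_one_sub hϱ0 hϱ1 hε
  have coeff_nonneg : 0 ≤ (1 - t) * (1 - √(1 - ϱ)) :=
    mul_nonneg (sub_nonneg.2 ht) (sub_nonneg.2 (Real.sqrt_le_one.2 (sub_le_self 1 hϱ0)))
  calc √(1 - ϱ) * a + ε * √ϱ * b
    _ ≤ √(1 - ϱ) * c + (1 - t) * (1 - √(1 - ϱ)) * c :=
      add_le_add (mul_le_mul_of_nonneg_left hac (Real.sqrt_nonneg _))
        (mul_le_mul hε_mul hbc hb coeff_nonneg)
    _ = (1 - t * (1 - √(1 - ϱ))) * c := by ring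
    _ = (1 - t * ϱ / (1 + √(1 - ϱ))) * c := by
      rw [mul_div_assoc, div_one_add_sqrt_one_sub hϱ1]

end Coefficients

theorem stmt1_general {α E : Type*} [MeasurableSpace α] [NormedAddCommGroup E] [NormedSpace ℝ E]
    [CompleteSpace E] {μ : Measure α} {Ω ΩI : Set α}
    (hΩI : NullMeasurableSet ΩI μ) (hdisj : AEDisjoint μ Ω ΩI)
    (hfin : μ (Ω ∪ ΩI) ≠ ⊤) (hpos : μ (Ω ∪ ΩI) ≠ 0)
    {u : α → E} (hu : MemLp u 2 (μ.restrict (Ω ∪ ΩI))) {t ϱ ε : ℝ} (ht : t ≤ 1)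
    (hϱ : ϱ = μ.real ΩI / μ.real (Ω ∪ ΩI)) (hε : ε ≤ (1 - t) * √ϱ / (1 + √(1 - ϱ)))
    (hbound : ‖∫ x in ΩI, u x ∂μ‖ ≤ ε * √(μ.real ΩI) * lpNorm u 2 (μ.restrict ΩI)) :
    (√(μ.real (Ω ∪ ΩI)))⁻¹ * ‖∫ x in Ω ∪ ΩI, u x ∂μ‖ ≤
      (1 - t * ϱ / (1 + √(1 - ϱ))) * lpNorm u 2 (μ.restrict (Ω ∪ ΩI)) := by
  set V := μ.real (Ω ∪ ΩI)
  have hV : 0 < V := ENNReal.toReal_pos hpos hfin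
  have hϱ0 : 0 ≤ ϱ := by rw [hϱ]; positivity
  have measureReal_ΩI : μ.real ΩI = ϱ * V := by rw [hϱ, div_mul_cancel₀ _ hV.ne']
  have measureReal_Ω : μ.real Ω = (1 - ϱ) * V := by
    have measureReal_add : V = μ.real Ω + μ.real ΩI :=
      measureReal_union₀ hΩI hdisj (measure_ne_top_of_subset Set.subset_union_left hfin)
        (measure_ne_top_of_subset Set.subset_union_right hfin)
    linear_combination -measureReal_add - measureReal_ΩI
  have hϱ1 : 0 ≤ 1 - ϱ := nonneg_of_mul_nonneg_left (measureReal_Ω ▸ measureReal_nonneg) hV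
  rw [inv_mul_le_iff₀ (Real.sqrt_pos.2 hV)]
  calc ‖∫ x in Ω ∪ ΩI, u x ∂μ‖
    _ ≤ √(μ.real Ω) * lpNorm u 2 (μ.restrict Ω)
          + ε * √(μ.real ΩI) * lpNorm u 2 (μ.restrict ΩI) := by
      grw [norm_setIntegral_union_le_sqrt_measureReal_mul_lpNorm_add hdisj hΩI hfin hu, hbound]
    _ = √V * (√(1 - ϱ) * lpNorm u 2 (μ.restrict Ω)
          + ε * √ϱ * lpNorm u 2 (μ.restrict ΩI)) := by
      rw [measureReal_Ω, measureReal_ΩI, Real.sqrt_mul hϱ1, Real.sqrt_mul hϱ0]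
      ring
    _ ≤ √V * ((1 - t * ϱ / (1 + √(1 - ϱ))) * lpNorm u 2 (μ.restrict (Ω ∪ ΩI))) := by
      gcongr
      exact sqrt_one_sub_mul_add_mul_sqrt_mul_le hϱ0 (sub_nonneg.1 hϱ1) ht hε
        (lpNorm_restrict_mono Set.subset_union_left hu) lpNorm_nonneg
        (lpNorm_restrict_mono Set.subset_union_right hu)

theorem stmt1 {n : ℕ} (Ω ΩI : Set (EuclideanSpace ℝ (Fin n)))
    (hΩmeas : MeasurableSet Ω) (hΩImeas : MeasurableSet ΩI)
    (hdisj : Disjoint Ω ΩI)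
    (hΩbdd : Bornology.IsBounded Ω) (hΩIbdd : Bornology.IsBounded ΩI)
    (hΩpos : 0 < volume Ω) (hΩIpos : 0 < volume ΩI)
    (u : EuclideanSpace ℝ (Fin n) → ℝ)
    (hu : MemLp u 2 (volume.restrict (Ω ∪ ΩI)))
    (t : ℝ) (ht0 : 0 < t) (ht1 : t ≤ 1)
    (ϱ : ℝ) (hϱ : ϱ = (volume ΩI).toReal / (volume (Ω ∪ ΩI)).toReal)
    (ε : ℝ) (hε0 : 0 ≤ ε)
    (hε : ε ≤ (1 - t) * Real.sqrt ϱ / (1 + Real.sqrt (1 - ϱ)))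
    (hbound : |∫ x in ΩI, u x| ≤ ε * Real.sqrt (volume ΩI).toReal * l2norm ΩI u) :
    (Real.sqrt (volume (Ω ∪ ΩI)).toReal)⁻¹ * |∫ x in Ω ∪ ΩI, u x| ≤
      (1 - t * ϱ / (1 + Real.sqrt (1 - ϱ))) * l2norm (Ω ∪ ΩI) u := by
  have huΩI : AEStronglyMeasurable u (volume.restrict ΩI) :=
    hu.aestronglyMeasurable.mono_measure (Measure.restrict_mono_set _ Set.subset_union_right)
  rw [l2norm_eq_lpNorm huΩI] at hbound
  rw [l2norm_eq_lpNorm hu.aestronglyMeasurable]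
  exact stmt1_general hΩImeas.nullMeasurableSet hdisj.aedisjoint
    (hΩbdd.union hΩIbdd).measure_lt_top.ne (hΩpos.trans_le (measure_mono Set.subset_union_left)).ne'
    hu ht1 hϱ hε hbound
end

section
/- Suppose there is a constant C₀ > 0 such that a(w,w) ≥ C₀·‖w‖²_{L²(Ω̄)} for every w ∈ L²(Ω̄) with ∫_{Ω̄} w(x) dx = 0 (a nonlocal Poincaré inequality). Let 0 < t ≤ 1, set ϱ = |Ω_I|/|Ω̄|, and let Π ⊂ L²(Ω_I) satisfy inf_{p∈Π} ‖1 − p‖_{L²(Ω_I)} ≤ ε·|Ω_I|^{1/2} with 0 ≤ ε ≤ (1−t)√ϱ/(1 + √(1−ϱ)). Then every u ∈ L²(Ω̄) with ∫_{Ω_I} u(x)·p(x) dx = 0 for all p ∈ Π satisfies a(u,u) ≥ (tϱ/(1 + √(1−ϱ)))·C₀·‖u‖²_{L²(Ω̄)}. -/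
open MeasureTheory

/-- The nonlocal bilinear form
`a(u,v) = ∫_D ∫_D γ(x,y) (u x - u y) (v x - v y) dy dx`. -/
noncomputable def aform {n : ℕ} (D : Set (EuclideanSpace ℝ (Fin n)))
    (γ : EuclideanSpace ℝ (Fin n) → EuclideanSpace ℝ (Fin n) → ℝ)
    (u v : EuclideanSpace ℝ (Fin n) → ℝ) : ℝ :=
  ∫ x in D, ∫ y in D, γ x y * (u x - u y) * (v x - v y)

/-!
Subtracting from `u` its mean leaves `a` unchanged, so the Poincaré inequality bounds `a(u,u)` from
below by `C₀ (‖u‖² - (∫ u)² / |Ω̄|)`, and only the mean of `u` has to be controlled. Extend `p ∈ Π`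
by zero to `Ω̄`. As `u` is orthogonal to it, `∫ u = ∫ u (1 - p)`, and
`‖1 - p‖² = |Ω| + ‖1 - p‖²_{Ω_I}` can be brought down to `|Ω| + ε² |Ω_I|`. Cauchy–Schwarz now gives
`a(u,u) ≥ ϱ (1 - ε²) C₀ ‖u‖²`, whose constant dominates `t ϱ / (1 + √(1 - ϱ)) C₀` for every
admissible `ε`.
-/

theorem exists_mem_lt_of_biInf_ofReal_le {ι : Type*} {s : Set ι} {f : ι → ℝ} {r δ : ℝ}
    (hr : 0 ≤ r) (h : ⨅ i ∈ s, ENNReal.ofReal (f i) ≤ ENNReal.ofReal r) (hδ : r < δ) :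
    ∃ i ∈ s, f i < δ := by
  have hδ_pos : 0 < δ := hr.trans_lt hδ
  have hlt := h.trans_lt ((ENNReal.ofReal_lt_ofReal_iff hδ_pos).2 hδ)
  simpa only [iInf_lt_iff, ENNReal.ofReal_lt_ofReal_iff hδ_pos, exists_prop] using hlt

section CauchySchwarz

variable {X : Type*} [MeasurableSpace X] {μ : Measure X}

theorem inner_toLp_eq_integral_mul {f g : X → ℝ} (hf : MemLp f 2 μ) (hg : MemLp g 2 μ) :
    inner ℝ (hf.toLp f) (hg.toLp g) = ∫ x, f x * g x ∂μ := by
  rw [L2.inner_def]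
  refine integral_congr_ae ?_
  filter_upwards [hf.coeFn_toLp, hg.coeFn_toLp] with x hfx hgx
  rw [hfx, hgx, Real.inner_apply]

theorem sq_integral_mul_le {f g : X → ℝ} (hf : MemLp f 2 μ) (hg : MemLp g 2 μ) :
    (∫ x, f x * g x ∂μ) ^ 2 ≤ (∫ x, f x ^ 2 ∂μ) * ∫ x, g x ^ 2 ∂μ := by
  simpa only [real_inner_comm, inner_toLp_eq_integral_mul, ← sq] using
    real_inner_mul_inner_self_le (hf.toLp f) (hg.toLp g)

end CauchySchwarz

section FiniteMeasure

variable {X : Type*} [MeasurableSpace X] {μ : Measure X} [IsFiniteMeasure μ] {u : X → ℝ}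

theorem integral_sub_average_sq [NeZero μ] (hu : MemLp u 2 μ) :
    ∫ x, (u x - ⨍ y, u y ∂μ) ^ 2 ∂μ = ∫ x, u x ^ 2 ∂μ - (∫ x, u x ∂μ) ^ 2 / μ.real Set.univ := by
  set c := ⨍ y, u y ∂μ with hc
  have hu_int : Integrable u μ := hu.integrable one_le_two
  have hdiff_int : Integrable (fun x => u x ^ 2 - 2 * c * u x) μ :=
    hu.integrable_sq.sub (hu_int.const_mul _)
  have hmass : μ.real Set.univ ≠ 0 := measureReal_univ_ne_zero
  calc ∫ x, (u x - c) ^ 2 ∂μ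
      = ∫ x, (u x ^ 2 - 2 * c * u x + c ^ 2) ∂μ := by
        congr with x; ring
    _ = ∫ x, u x ^ 2 ∂μ - 2 * c * ∫ x, u x ∂μ + μ.real Set.univ * c ^ 2 := by
        rw [integral_add hdiff_int (integrable_const _),
          integral_sub hu.integrable_sq (hu_int.const_mul _), integral_const_mul, integral_const,
          smul_eq_mul]
    _ = ∫ x, u x ^ 2 ∂μ - (∫ x, u x ∂μ) ^ 2 / μ.real Set.univ := by
        rw [hc, average_eq, smul_eq_mul]
        field_simp
        ring

theorem poincare_sub_sq_integral_div [NeZero μ] {E : (X → ℝ) → ℝ} {C₀ : ℝ}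
    (hE : ∀ (w : X → ℝ) (c : ℝ), E (fun x => w x - c) = E w)
    (hpoincare : ∀ w, MemLp w 2 μ → ∫ x, w x ∂μ = 0 → C₀ * ∫ x, w x ^ 2 ∂μ ≤ E w)
    (hu : MemLp u 2 μ) :
    C₀ * (∫ x, u x ^ 2 ∂μ - (∫ x, u x ∂μ) ^ 2 / μ.real Set.univ) ≤ E u := by
  rw [← integral_sub_average_sq hu, ← hE u (⨍ y, u y ∂μ)]
  exact hpoincare _ (hu.sub (memLp_const _)) (integral_sub_average μ u)

variable {S : Set X}

theorem integral_one_sub_indicator_sq (hS : MeasurableSet S) {p : X → ℝ}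
    (hp : MemLp p 2 (μ.restrict S)) :
    ∫ x, (1 - S.indicator p x) ^ 2 ∂μ = μ.real Sᶜ + ∫ x in S, (1 - p x) ^ 2 ∂μ := by
  have hp' : MemLp (S.indicator p) 2 μ := (memLp_indicator_iff_restrict hS).2 hp
  have hint : Integrable (fun x => (1 - S.indicator p x) ^ 2) μ :=
    ((memLp_const 1).sub hp').integrable_sq
  have on_S : ∫ x in S, (1 - S.indicator p x) ^ 2 ∂μ = ∫ x in S, (1 - p x) ^ 2 ∂μ :=
    setIntegral_congr_fun hS fun x hx => by simp only [Set.indicator_of_mem hx]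
  have on_compl : ∫ x in Sᶜ, (1 - S.indicator p x) ^ 2 ∂μ = ∫ _ in Sᶜ, 1 ∂μ :=
    setIntegral_congr_fun hS.compl fun x hx => by
      simp only [Set.indicator_of_notMem hx, sub_zero, one_pow]
  rw [← integral_add_compl hS hint, on_S, on_compl, setIntegral_const, smul_eq_mul, mul_one,
    add_comm]

theorem sq_integral_le_of_setIntegral_mul_eq_zero (hS : MeasurableSet S) {p : X → ℝ}
    (hu : MemLp u 2 μ) (hp : MemLp p 2 (μ.restrict S)) (horth : ∫ x in S, u x * p x ∂μ = 0) :
    (∫ x, u x ∂μ) ^ 2 ≤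
      (∫ x, u x ^ 2 ∂μ) * (μ.real Sᶜ + ∫ x in S, (1 - p x) ^ 2 ∂μ) := by
  have hp' : MemLp (S.indicator p) 2 μ := (memLp_indicator_iff_restrict hS).2 hp
  have hup_int : Integrable (fun x => u x * S.indicator p x) μ := hu.integrable_mul hp'
  have horth' : ∫ x, u x * S.indicator p x ∂μ = 0 := by
    simp only [← Set.indicator_mul_right]
    rw [integral_indicator hS, horth]
  calc (∫ x, u x ∂μ) ^ 2
      = (∫ x, u x * (1 - S.indicator p x) ∂μ) ^ 2 := by
        simp only [mul_sub, mul_one]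
        rw [integral_sub (hu.integrable one_le_two) hup_int, horth', sub_zero]
    _ ≤ (∫ x, u x ^ 2 ∂μ) * ∫ x, (1 - S.indicator p x) ^ 2 ∂μ :=
        sq_integral_mul_le hu ((memLp_const 1).sub hp')
    _ = (∫ x, u x ^ 2 ∂μ) * (μ.real Sᶜ + ∫ x in S, (1 - p x) ^ 2 ∂μ) := by
        rw [integral_one_sub_indicator_sq hS hp]

theorem sq_integral_le_of_biInf_le (hS : MeasurableSet S) {P : Set (X → ℝ)}
    (hP : ∀ p ∈ P, MemLp p 2 (μ.restrict S)) {r : ℝ} (hr : 0 ≤ r)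
    (hdist : ⨅ p ∈ P, ENNReal.ofReal (√(∫ x in S, (1 - p x) ^ 2 ∂μ)) ≤ ENNReal.ofReal r)
    (hu : MemLp u 2 μ) (horth : ∀ p ∈ P, ∫ x in S, u x * p x ∂μ = 0) :
    (∫ x, u x ∂μ) ^ 2 ≤ (∫ x, u x ^ 2 ∂μ) * (μ.real Sᶜ + r ^ 2) := by
  have bound_of_gt : ∀ δ, r < δ →
      (∫ x, u x ∂μ) ^ 2 ≤ (∫ x, u x ^ 2 ∂μ) * (μ.real Sᶜ + δ ^ 2) := by
    intro δ hδ
    obtain ⟨p, hpP, hpδ⟩ := exists_mem_lt_of_biInf_ofReal_le hr hdist hδ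
    have hpδ_sq : ∫ x in S, (1 - p x) ^ 2 ∂μ ≤ δ ^ 2 :=
      ((Real.sqrt_lt' (hr.trans_lt hδ)).1 hpδ).le
    calc (∫ x, u x ∂μ) ^ 2
        ≤ (∫ x, u x ^ 2 ∂μ) * (μ.real Sᶜ + ∫ x in S, (1 - p x) ^ 2 ∂μ) :=
          sq_integral_le_of_setIntegral_mul_eq_zero hS hu (hP p hpP) (horth p hpP)
      _ ≤ (∫ x, u x ^ 2 ∂μ) * (μ.real Sᶜ + δ ^ 2) := by gcongr
  have hcont : Continuous fun δ : ℝ => (∫ x, u x ^ 2 ∂μ) * (μ.real Sᶜ + δ ^ 2) := by fun_prop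
  exact ge_of_tendsto (hcont.continuousWithinAt (s := Set.Ioi r))
    (eventually_mem_nhdsWithin.mono bound_of_gt)

end FiniteMeasure

theorem aform_sub_const {n : ℕ} (D : Set (EuclideanSpace ℝ (Fin n)))
    (γ : EuclideanSpace ℝ (Fin n) → EuclideanSpace ℝ (Fin n) → ℝ)
    (u : EuclideanSpace ℝ (Fin n) → ℝ) (c : ℝ) :
    aform D γ (fun x => u x - c) (fun x => u x - c) = aform D γ u u := by
  simp only [aform, sub_sub_sub_cancel_right]

theorem mul_div_one_add_sqrt_le {t ϱ ε : ℝ} (ht : 0 ≤ t) (ht1 : t ≤ 1) (hϱ : 0 ≤ ϱ) (hϱ1 : ϱ ≤ 1)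
    (hε : 0 ≤ ε) (hεt : ε ≤ (1 - t) * √ϱ / (1 + √(1 - ϱ))) :
    t * ϱ / (1 + √(1 - ϱ)) ≤ ϱ * (1 - ε ^ 2) := by
  set s := √(1 - ϱ)
  have hs_nonneg : 0 ≤ s := Real.sqrt_nonneg _
  have hs_le : s ≤ 1 := Real.sqrt_le_one.2 (by linarith)
  have hϱ_eq : ϱ = (1 - s) * (1 + s) := by
    linear_combination Real.sq_sqrt (sub_nonneg.2 hϱ1)
  have hε_sq : ε ^ 2 ≤ (1 - t) ^ 2 * (1 - s) / (1 + s) := by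
    calc ε ^ 2 ≤ ((1 - t) * √ϱ / (1 + s)) ^ 2 := by gcongr
      _ = (1 - t) ^ 2 * ϱ / (1 + s) ^ 2 := by rw [div_pow, mul_pow, Real.sq_sqrt hϱ]
      _ = (1 - t) ^ 2 * (1 - s) / (1 + s) := by rw [hϱ_eq]; field_simp
  have ht_le : t + (1 - t) ^ 2 * (1 - s) ≤ 1 + s := by
    calc t + (1 - t) ^ 2 * (1 - s) ≤ t + (1 - t) * (1 - s) := by
          gcongr
          exact pow_le_of_le_one (sub_nonneg.2 ht1) (sub_le_self 1 ht) two_ne_zero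
      _ ≤ 1 + s := by linarith [mul_nonneg (sub_nonneg.2 ht1) hs_nonneg]
  have ht_div_le : t / (1 + s) ≤ 1 - (1 - t) ^ 2 * (1 - s) / (1 + s) := by
    rwa [le_sub_iff_add_le, ← add_div, div_le_one (by positivity)]
  calc t * ϱ / (1 + s) = ϱ * (t / (1 + s)) := by ring
    _ ≤ ϱ * (1 - ε ^ 2) := by gcongr; linarith

theorem stmt5_general {X : Type*} [MeasurableSpace X] {μ : Measure X} {D S : Set X}
    (hS : MeasurableSet S) (hSD : S ⊆ D) (hD₀ : μ D ≠ 0) (hD : μ D ≠ ⊤)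
    {E : (X → ℝ) → ℝ} (hE : ∀ (w : X → ℝ) (c : ℝ), E (fun x => w x - c) = E w)
    {C₀ : ℝ} (hC₀ : 0 ≤ C₀)
    (hpoincare : ∀ w, MemLp w 2 (μ.restrict D) → ∫ x in D, w x ∂μ = 0 →
      C₀ * ∫ x in D, w x ^ 2 ∂μ ≤ E w)
    {P : Set (X → ℝ)} (hP : ∀ p ∈ P, MemLp p 2 (μ.restrict S)) {ε : ℝ} (hε : 0 ≤ ε)
    (hdist : ⨅ p ∈ P, ENNReal.ofReal (√(∫ x in S, (1 - p x) ^ 2 ∂μ)) ≤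
      ENNReal.ofReal (ε * √(μ.real S)))
    {u : X → ℝ} (hu : MemLp u 2 (μ.restrict D)) (horth : ∀ p ∈ P, ∫ x in S, u x * p x ∂μ = 0) :
    μ.real S / μ.real D * (1 - ε ^ 2) * C₀ * ∫ x in D, u x ^ 2 ∂μ ≤ E u := by
  have : IsFiniteMeasure (μ.restrict D) := isFiniteMeasure_restrict.2 hD
  have : NeZero (μ.restrict D) := ⟨Measure.restrict_eq_zero.not.2 hD₀⟩
  have hrestrict : (μ.restrict D).restrict S = μ.restrict S :=
    Measure.restrict_restrict_of_subset hSD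
  have hcompl : (μ.restrict D).real Sᶜ = μ.real D - μ.real S := by
    rw [measureReal_compl hS, measureReal_restrict_apply_univ, measureReal_restrict_apply hS,
      Set.inter_eq_left.2 hSD]
  have hmean : (∫ x in D, u x ∂μ) ^ 2 ≤
      (∫ x in D, u x ^ 2 ∂μ) * (μ.real D - μ.real S + ε ^ 2 * μ.real S) := by
    rw [← hcompl, ← Real.sq_sqrt (measureReal_nonneg (μ := μ) (s := S)), ← mul_pow]
    simp only [← hrestrict] at hP hdist horth
    exact sq_integral_le_of_biInf_le hS hP (by positivity) hdist hu horth
  have hDreal : μ.real D ≠ 0 := ENNReal.toReal_ne_zero.2 ⟨hD₀, hD⟩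
  calc μ.real S / μ.real D * (1 - ε ^ 2) * C₀ * ∫ x in D, u x ^ 2 ∂μ
      = C₀ * (∫ x in D, u x ^ 2 ∂μ -
          (∫ x in D, u x ^ 2 ∂μ) * (μ.real D - μ.real S + ε ^ 2 * μ.real S) / μ.real D) := by
        field_simp
        ring
    _ ≤ C₀ * (∫ x in D, u x ^ 2 ∂μ - (∫ x in D, u x ∂μ) ^ 2 / μ.real D) := by gcongr
    _ ≤ E u := by
        rw [← measureReal_restrict_apply_univ D]
        exact poincare_sub_sq_integral_div hE hpoincare hu

theorem stmt5 {n : ℕ} (Ω ΩI : Set (EuclideanSpace ℝ (Fin n)))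
    (hΩmeas : MeasurableSet Ω) (hΩImeas : MeasurableSet ΩI)
    (hdisj : Disjoint Ω ΩI)
    (hΩbdd : Bornology.IsBounded Ω) (hΩIbdd : Bornology.IsBounded ΩI)
    (hΩpos : 0 < volume Ω) (hΩIpos : 0 < volume ΩI)
    (γ : EuclideanSpace ℝ (Fin n) → EuclideanSpace ℝ (Fin n) → ℝ)
    (hγmeas : Measurable fun p : EuclideanSpace ℝ (Fin n) × EuclideanSpace ℝ (Fin n) => γ p.1 p.2)
    (hγnonneg : ∀ x y, 0 ≤ γ x y)
    (hγbdd : ∃ M, ∀ x y, γ x y ≤ M)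
    -- the nonlocal Poincaré inequality
    (C₀ : ℝ) (hC₀ : 0 < C₀)
    (hpoincare : ∀ w : EuclideanSpace ℝ (Fin n) → ℝ,
      MemLp w 2 (volume.restrict (Ω ∪ ΩI)) → (∫ x in Ω ∪ ΩI, w x) = 0 →
      aform (Ω ∪ ΩI) γ w w ≥ C₀ * ∫ x in Ω ∪ ΩI, w x ^ 2)
    (t : ℝ) (ht0 : 0 < t) (ht1 : t ≤ 1)
    (ϱ : ℝ) (hϱ : ϱ = (volume ΩI).toReal / (volume (Ω ∪ ΩI)).toReal)
    (P : Set (EuclideanSpace ℝ (Fin n) → ℝ))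
    (hP : ∀ p ∈ P, MemLp p 2 (volume.restrict ΩI))
    (ε : ℝ) (hε0 : 0 ≤ ε)
    (hε : ε ≤ (1 - t) * Real.sqrt ϱ / (1 + Real.sqrt (1 - ϱ)))
    (hdist : ⨅ p ∈ P, ENNReal.ofReal (l2norm ΩI (fun x => 1 - p x)) ≤
      ENNReal.ofReal (ε * Real.sqrt (volume ΩI).toReal))
    (u : EuclideanSpace ℝ (Fin n) → ℝ)
    (hu : MemLp u 2 (volume.restrict (Ω ∪ ΩI)))
    (horth : ∀ p ∈ P, ∫ x in ΩI, u x * p x = 0) :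
    aform (Ω ∪ ΩI) γ u u ≥
      t * ϱ / (1 + Real.sqrt (1 - ϱ)) * C₀ * ∫ x in Ω ∪ ΩI, u x ^ 2 := by
  have hsub : ΩI ⊆ Ω ∪ ΩI := Set.subset_union_right
  have hD₀ : volume (Ω ∪ ΩI) ≠ 0 := (hΩIpos.trans_le (measure_mono hsub)).ne'
  have hD : volume (Ω ∪ ΩI) ≠ ⊤ := (hΩbdd.union hΩIbdd).measure_lt_top.ne
  have hϱ₀ : 0 ≤ ϱ := by rw [hϱ]; positivity
  have hϱ₁ : ϱ ≤ 1 := hϱ ▸ div_le_one_of_le₀ (measureReal_mono hsub hD) measureReal_nonneg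
  have hconst := mul_div_one_add_sqrt_le ht0.le ht1 hϱ₀ hϱ₁ hε0 hε
  calc t * ϱ / (1 + √(1 - ϱ)) * C₀ * ∫ x in Ω ∪ ΩI, u x ^ 2
      ≤ ϱ * (1 - ε ^ 2) * C₀ * ∫ x in Ω ∪ ΩI, u x ^ 2 := by gcongr ?_ * C₀ * _
    _ ≤ aform (Ω ∪ ΩI) γ u u :=
        hϱ ▸ stmt5_general (E := fun w => aform (Ω ∪ ΩI) γ w w) hΩImeas hsub hD₀ hD
          (aform_sub_const _ γ) hC₀.le hpoincare hP hε0 hdist hu horth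
end

section
/- Suppose there is a constant C₀ > 0 such that a(w,w) ≥ C₀·‖w‖²_{L²(Ω̄)} for every w ∈ L²(Ω̄) with ∫_{Ω̄} w(x) dx = 0 (a nonlocal Poincaré inequality). Then for every f ∈ L²(Ω) there exist unique u ∈ L²(Ω̄) and λ ∈ L²(Ω_I) such that: a(u,v) + ∫_{Ω_I} λ(x)·v(x) dx = ∫_Ω v(x)·f(x) dx for all v ∈ L²(Ω̄); and ∫_{Ω_I} u(x)·ν(x) dx = 0 for all ν ∈ L²(Ω_I). Moreover, u = 0 almost everywhere on Ω_I. -/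
open MeasureTheory

/-!
Write `T` for the restriction `L²(Ω̄) → L²(Ω_I)`, so that the system is the saddle point problem
`a(u, v) + ⟨λ, T v⟩ = F v`, `T u = 0`. By Brezzi's theorem it is enough that `T` is surjective
(extend by zero) and that `a` is coercive on `ker T`. For the latter, the constants lie in the
kernel of `a` but not in `ker T`: if `u ∈ ker T` has mean `m` and `w = u - m`, then `T w = -T m`, so
`m`, and with it `‖u‖`, is controlled by `‖w‖`, while `a(u, u) = a(w, w)` is bounded below by the
Poincaré inequality.

The form itself is `a(u, v) = ⟨γ • δu, δv⟩` with `δu(x, y) = u x - u y`, which makes its continuity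
and its vanishing on constants immediate.
-/

open scoped ENNReal

section Coercivity

variable {H J : Type*} [NormedAddCommGroup H] [NormedSpace ℝ H] [NormedAddCommGroup J]
  [NormedSpace ℝ J]

lemma norm_le_mul_norm_sub_smul (T : H →L[ℝ] J) {e u : H} (hTe : T e ≠ 0) (hTu : T u = 0) (m : ℝ) :
    ‖u‖ ≤ (1 + ‖T‖ * ‖e‖ / ‖T e‖) * ‖u - m • e‖ := by
  have hm : |m| * ‖T e‖ ≤ ‖T‖ * ‖u - m • e‖ := by
    simpa [hTu, norm_smul] using T.le_opNorm (u - m • e)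
  calc ‖u‖ = ‖(u - m • e) + m • e‖ := by rw [sub_add_cancel]
    _ ≤ ‖u - m • e‖ + |m| * ‖e‖ := by grw [norm_add_le, norm_smul, Real.norm_eq_abs]
    _ ≤ ‖u - m • e‖ + ‖T‖ * ‖u - m • e‖ / ‖T e‖ * ‖e‖ := by
      gcongr
      rwa [le_div_iff₀ (norm_pos_iff.2 hTe)]
    _ = (1 + ‖T‖ * ‖e‖ / ‖T e‖) * ‖u - m • e‖ := by ring

/-- Coercivity of a bilinear form on a subspace, i.e. `IsCoercive` for its restriction. -/
def IsCoerciveOn (B : H →L[ℝ] H →L[ℝ] ℝ) (V : Submodule ℝ H) : Prop :=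
  ∃ C, 0 < C ∧ ∀ u ∈ V, C * ‖u‖ ^ 2 ≤ B u u

namespace IsCoerciveOn

variable {B : H →L[ℝ] H →L[ℝ] ℝ} {V : Submodule ℝ H}

lemma isCoercive_bilinearComp (hB : IsCoerciveOn B V) :
    IsCoercive (B.bilinearComp V.subtypeL V.subtypeL) := by
  obtain ⟨C, hC, hCB⟩ := hB
  exact ⟨C, hC, fun u ↦ by simpa [sq, mul_assoc] using hCB u u.2⟩

lemma eq_zero_of_apply_self_eq_zero (hB : IsCoerciveOn B V) {u : H} (hu : u ∈ V)
    (hBu : B u u = 0) : u = 0 := by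
  obtain ⟨C, hC, hCB⟩ := hB
  have hle : ‖u‖ ^ 2 ≤ 0 := nonpos_of_mul_nonpos_right (hBu ▸ hCB u hu) hC
  exact norm_eq_zero.1 (sq_nonpos_iff _ |>.1 hle)

lemma ker_of_functional_ker {ℓ : H →ₗ[ℝ] ℝ} (hB : IsCoerciveOn B ℓ.ker) {e : H}
    (hBe : ∀ v, B e v = 0) (hBe' : ∀ u, B u e = 0) (hℓe : ℓ e ≠ 0) {T : H →L[ℝ] J}
    (hTe : T e ≠ 0) : IsCoerciveOn B T.ker := by
  obtain ⟨C, hC, hCB⟩ := hB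
  set K : ℝ := 1 + ‖T‖ * ‖e‖ / ‖T e‖
  have hK : 0 < K := by positivity
  refine ⟨C / K ^ 2, by positivity, fun u hu ↦ ?_⟩
  set w : H := u - (ℓ u / ℓ e) • e
  have hℓw : ℓ w = 0 := by simp [w, hℓe]
  have hBw : B w w = B u u := by simp [w, hBe, hBe']
  have huw : ‖u‖ ≤ K * ‖w‖ := norm_le_mul_norm_sub_smul T hTe hu _
  calc C / K ^ 2 * ‖u‖ ^ 2 ≤ C / K ^ 2 * (K * ‖w‖) ^ 2 := by gcongr
    _ = C * ‖w‖ ^ 2 := by field_simp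
    _ ≤ B u u := hBw ▸ hCB w hℓw

end IsCoerciveOn

end Coercivity

section SaddlePoint

lemma exists_comp_eq_of_surjective_of_ker_le {𝕜 E F : Type*} [NontriviallyNormedField 𝕜]
    [NormedAddCommGroup E] [NormedSpace 𝕜 E] [CompleteSpace E] [NormedAddCommGroup F]
    [NormedSpace 𝕜 F] [CompleteSpace F] {T : E →L[𝕜] F} (hT : Function.Surjective T)
    {r : StrongDual 𝕜 E} (hr : T.ker ≤ r.ker) :
    ∃ ℓ : StrongDual 𝕜 F, ℓ.comp T = r := by
  have hmem : r.toLinearMap ∈ LinearMap.range T.toLinearMap.dualMap := by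
    rw [LinearMap.range_dualMap_eq_dualAnnihilator_ker, Submodule.mem_dualAnnihilator]
    exact fun v hv ↦ hr hv
  obtain ⟨ℓ, hℓ⟩ := hmem
  have hcont : Continuous ℓ := by
    rw [(T.isQuotientMap hT).continuous_iff]
    exact r.continuous.congr fun v ↦ (LinearMap.congr_fun hℓ v).symm
  exact ⟨⟨ℓ, hcont⟩, ContinuousLinearMap.ext fun v ↦ LinearMap.congr_fun hℓ v⟩

variable {H J : Type*} [NormedAddCommGroup H] [InnerProductSpace ℝ H] [NormedAddCommGroup J]
  [InnerProductSpace ℝ J] {B : H →L[ℝ] H →L[ℝ] ℝ} {T : H →L[ℝ] J}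

lemma eq_zero_and_eq_zero_of_homogeneous_saddlePoint (hT : Function.Surjective T)
    (hB : IsCoerciveOn B T.ker) {u : H} {l : J}
    (hul : ∀ v, B u v + inner ℝ l (T v) = 0) (hu : T u = 0) : u = 0 ∧ l = 0 := by
  have hBu : B u u = 0 := by simpa [hu] using hul u
  have hu0 : u = 0 := hB.eq_zero_of_apply_self_eq_zero hu hBu
  obtain ⟨v, rfl⟩ := hT l
  exact ⟨hu0, by simpa [hu0] using hul v⟩

variable [CompleteSpace H]

lemma exists_forall_apply_eq_of_isCoercive {B : H →L[ℝ] H →L[ℝ] ℝ} (hB : IsCoercive B)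
    (F : StrongDual ℝ H) : ∃ u, ∀ v, B u v = F v := by
  refine ⟨hB.continuousLinearEquivOfBilin.symm ((InnerProductSpace.toDual ℝ H).symm F),
    fun v ↦ ?_⟩
  rw [← hB.continuousLinearEquivOfBilin_apply, ContinuousLinearEquiv.apply_symm_apply,
    InnerProductSpace.toDual_symm_apply]

lemma exists_saddlePoint [CompleteSpace J] (hT : Function.Surjective T)
    (hB : IsCoerciveOn B T.ker) (F : StrongDual ℝ H) (g : J) :
    ∃ (u : H) (l : J), (∀ v, B u v + inner ℝ l (T v) = F v) ∧ T u = g := by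
  obtain ⟨u₀, hu₀⟩ := hT g
  obtain ⟨z, hz⟩ := exists_forall_apply_eq_of_isCoercive hB.isCoercive_bilinearComp
    ((F - B u₀).comp T.ker.subtypeL)
  have hker : T.ker ≤ (F - B (u₀ + z)).ker := fun v hv ↦ by
    have hzv : B z v = F v - B u₀ v := hz ⟨v, hv⟩
    simp [hzv]
  obtain ⟨ℓ, hℓ⟩ := exists_comp_eq_of_surjective_of_ker_le hT hker
  refine ⟨u₀ + z, (InnerProductSpace.toDual ℝ J).symm ℓ, fun v ↦ ?_, ?_⟩
  · have hℓv : ℓ (T v) = F v - B (u₀ + z) v := DFunLike.congr_fun hℓ v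
    rw [InnerProductSpace.toDual_symm_apply, hℓv, add_sub_cancel]
  · have hTz : T z = 0 := z.2
    rw [map_add, hu₀, hTz, add_zero]

theorem existsUnique_saddlePoint [CompleteSpace J] (hT : Function.Surjective T)
    (hB : IsCoerciveOn B T.ker) (F : StrongDual ℝ H) (g : J) :
    ∃! p : H × J, (∀ v, B p.1 v + inner ℝ p.2 (T v) = F v) ∧ T p.1 = g := by
  obtain ⟨u, l, hul, hu⟩ := exists_saddlePoint hT hB F g
  refine ⟨(u, l), ⟨hul, hu⟩, fun ⟨u', l'⟩ ⟨hul', hu'⟩ ↦ ?_⟩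
  have hdiff : ∀ v, B (u' - u) v + inner ℝ (l' - l) (T v) = 0 := fun v ↦ by
    rw [map_sub, sub_apply, inner_sub_left]
    linarith [hul v, hul' v]
  obtain ⟨hu0, hl0⟩ := eq_zero_and_eq_zero_of_homogeneous_saddlePoint hT hB hdiff
    (by rw [map_sub, hu', hu, sub_self])
  exact Prod.ext (sub_eq_zero.1 hu0) (sub_eq_zero.1 hl0)

end SaddlePoint

section Restriction

variable {α E : Type*} [MeasurableSpace α] [NormedAddCommGroup E] [NormedSpace ℝ E]
  {μ : Measure α} {s t : Set α} {p : ℝ≥0∞} [Fact (1 ≤ p)]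

variable (E μ p) in
/-- Restriction of functions `Lᵖ(t) → Lᵖ(s)` for `s ⊆ t`. Unlike with `LpToLpRestrictCLM`, the
measure on the target is `μ.restrict s` rather than `(μ.restrict t).restrict s`. -/
noncomputable def lpRestrict (hst : s ⊆ t) : Lp E p (μ.restrict t) →L[ℝ] Lp E p (μ.restrict s) :=
  Lp.LpToLpOfMeasureLeSMul ENNReal.one_ne_top
    ((Measure.restrict_mono_set μ hst).trans_eq (one_smul _ _).symm)

lemma coeFn_lpRestrict (hst : s ⊆ t) (u : Lp E p (μ.restrict t)) :
    lpRestrict E μ p hst u =ᵐ[μ.restrict s] u :=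
  Lp.coeFn_LpToLpOfMeasureLeSMul _ _ u

lemma lpRestrict_eq_zero_iff (hst : s ⊆ t) (u : Lp E p (μ.restrict t)) :
    lpRestrict E μ p hst u = 0 ↔ ∀ᵐ x ∂μ.restrict s, u x = 0 := by
  rw [Lp.eq_zero_iff_ae_eq_zero]
  exact Filter.eventually_congr ((coeFn_lpRestrict hst u).mono fun x hx ↦ by rw [hx]; rfl)

lemma lpRestrict_surjective (hs : MeasurableSet s) (hst : s ⊆ t) :
    Function.Surjective (lpRestrict E μ p hst) := by
  intro g
  have hg : MemLp (s.indicator g) p (μ.restrict t) := by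
    rw [memLp_indicator_iff_restrict hs, Measure.restrict_restrict_of_subset hst]
    exact Lp.memLp g
  refine ⟨hg.toLp, Lp.ext ?_⟩
  filter_upwards [coeFn_lpRestrict hst hg.toLp,
    ae_restrict_of_ae_restrict_of_subset hst hg.coeFn_toLp, ae_restrict_mem hs]
    with x hrestrict htoLp hxs
  rw [hrestrict, htoLp, Set.indicator_of_mem hxs]

lemma inner_lpRestrict (hst : s ⊆ t) (g : Lp ℝ 2 (μ.restrict s)) (u : Lp ℝ 2 (μ.restrict t)) :
    inner ℝ g (lpRestrict ℝ μ 2 hst u) = ∫ x in s, g x * u x ∂μ := by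
  rw [L2.inner_def]
  refine integral_congr_ae ((coeFn_lpRestrict hst u).mono fun x hx ↦ ?_)
  simp [hx, mul_comm]

lemma lpRestrict_eq_zero_iff_forall_integral_eq_zero (hst : s ⊆ t) (u : Lp ℝ 2 (μ.restrict t)) :
    lpRestrict ℝ μ 2 hst u = 0 ↔ ∀ g : Lp ℝ 2 (μ.restrict s), ∫ x in s, u x * g x ∂μ = 0 := by
  simp_rw [mul_comm (u _), ← inner_lpRestrict hst]
  exact ⟨fun h g ↦ by rw [h, inner_zero_right], fun h ↦ inner_self_eq_zero.1 (h _)⟩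

end Restriction

section NonlocalForm

variable {α : Type*} [MeasurableSpace α] {μ : Measure α} [IsFiniteMeasure μ]

variable (μ) in
/-- The nonlocal gradient `u ↦ ((x, y) ↦ u x - u y)` as an operator `L²(μ) → L²(μ × μ)`. -/
noncomputable def lpDifference : Lp ℝ 2 μ →L[ℝ] Lp ℝ 2 (μ.prod μ) :=
  ((Lp.compMeasurePreservingₗᵢ ℝ Prod.fst
      ⟨measurable_fst, Measure.map_fst_prod⟩).toContinuousLinearMap -
    (Lp.compMeasurePreservingₗᵢ ℝ Prod.snd
      ⟨measurable_snd, Measure.map_snd_prod⟩).toContinuousLinearMap).comp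
    (Lp.LpToLpOfMeasureLeSMul (measure_ne_top μ Set.univ) le_rfl)

lemma coeFn_lpDifference (u : Lp ℝ 2 μ) :
    lpDifference μ u =ᵐ[μ.prod μ] fun z ↦ u z.1 - u z.2 := by
  set u' : Lp ℝ 2 (μ Set.univ • μ) :=
    Lp.LpToLpOfMeasureLeSMul (measure_ne_top μ Set.univ) le_rfl u
  have hu' : u' =ᵐ[μ Set.univ • μ] u := Lp.coeFn_LpToLpOfMeasureLeSMul _ _ u
  have hfst : MeasurePreserving Prod.fst (μ.prod μ) (μ Set.univ • μ) :=
    ⟨measurable_fst, Measure.map_fst_prod⟩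
  have hsnd : MeasurePreserving Prod.snd (μ.prod μ) (μ Set.univ • μ) :=
    ⟨measurable_snd, Measure.map_snd_prod⟩
  filter_upwards [Lp.coeFn_sub (Lp.compMeasurePreserving Prod.fst hfst u')
      (Lp.compMeasurePreserving Prod.snd hsnd u'),
    Lp.coeFn_compMeasurePreserving u' hfst, Lp.coeFn_compMeasurePreserving u' hsnd,
    hfst.quasiMeasurePreserving.ae_eq_comp hu', hsnd.quasiMeasurePreserving.ae_eq_comp hu']
    with z hsub hcompfst hcompsnd hufst husnd
  calc lpDifference μ u z = u' z.1 - u' z.2 := by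
        rw [Pi.sub_apply, hcompfst, hcompsnd] at hsub
        exact hsub
    _ = u z.1 - u z.2 := congrArg₂ (· - ·) hufst husnd

lemma lpDifference_const (c : ℝ) : lpDifference μ (Lp.const 2 μ c) = 0 := by
  have hconst := Lp.coeFn_const 2 μ c
  refine (Lp.eq_zero_iff_ae_eq_zero).2 ?_
  filter_upwards [coeFn_lpDifference (Lp.const 2 μ c),
    Measure.quasiMeasurePreserving_fst.ae_eq_comp hconst,
    Measure.quasiMeasurePreserving_snd.ae_eq_comp hconst] with z hdiff hfst hsnd
  rw [hdiff]
  exact sub_eq_zero.2 (hfst.trans hsnd.symm)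

/-- The bilinear form `(u, v) ↦ ∫∫ γ(x, y) (u x - u y) (v x - v y)` on `L²(μ)` for an essentially
bounded kernel `γ`, encoded as the `L²(μ × μ)` inner product of `γ • lpDifference μ u` with
`lpDifference μ v`. -/
noncomputable def nonlocalForm (γ : Lp ℝ ∞ (μ.prod μ)) : Lp ℝ 2 μ →L[ℝ] Lp ℝ 2 μ →L[ℝ] ℝ :=
  (innerSL ℝ).bilinearComp
    (((ContinuousLinearMap.mul ℝ ℝ).holderL (μ.prod μ) ∞ 2 2 γ).comp (lpDifference μ))
    (lpDifference μ)

lemma nonlocalForm_const_left (γ : Lp ℝ ∞ (μ.prod μ)) (c : ℝ) (v : Lp ℝ 2 μ) :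
    nonlocalForm γ (Lp.const 2 μ c) v = 0 := by
  simp only [nonlocalForm, ContinuousLinearMap.bilinearComp_apply, ContinuousLinearMap.comp_apply,
    lpDifference_const, map_zero, zero_apply]

lemma nonlocalForm_const_right (γ : Lp ℝ ∞ (μ.prod μ)) (u : Lp ℝ 2 μ) (c : ℝ) :
    nonlocalForm γ u (Lp.const 2 μ c) = 0 := by
  simp only [nonlocalForm, ContinuousLinearMap.bilinearComp_apply, lpDifference_const, map_zero]

lemma nonlocalForm_toLp_apply {γ : α → α → ℝ} (hγ : MemLp γ.uncurry ∞ (μ.prod μ))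
    (u v : Lp ℝ 2 μ) :
    nonlocalForm (hγ.toLp γ.uncurry) u v =
      ∫ x, ∫ y, γ x y * (u x - u y) * (v x - v y) ∂μ ∂μ := by
  set γu := (ContinuousLinearMap.mul ℝ ℝ).holder 2 (hγ.toLp γ.uncurry) (lpDifference μ u)
  have hγu : γu =ᵐ[μ.prod μ] fun z ↦ hγ.toLp γ.uncurry z * lpDifference μ u z :=
    ContinuousLinearMap.coeFn_holder _ _ _
  have hintegrand : (fun z ↦ inner ℝ (γu z) (lpDifference μ v z)) =ᵐ[μ.prod μ]
      fun z ↦ γ z.1 z.2 * (u z.1 - u z.2) * (v z.1 - v z.2) := by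
    filter_upwards [hγu, hγ.coeFn_toLp, coeFn_lpDifference u, coeFn_lpDifference v]
      with z hγuz hγz huz hvz
    rw [hγuz, hγz, huz, hvz]
    exact mul_comm _ _
  calc nonlocalForm (hγ.toLp γ.uncurry) u v
      = ∫ z, inner ℝ (γu z) (lpDifference μ v z) ∂μ.prod μ := rfl
    _ = ∫ z, γ z.1 z.2 * (u z.1 - u z.2) * (v z.1 - v z.2) ∂μ.prod μ :=
      integral_congr_ae hintegrand
    _ = ∫ x, ∫ y, γ x y * (u x - u y) * (v x - v y) ∂μ ∂μ :=
      integral_prod _ ((L2.integrable_inner γu (lpDifference μ v)).congr hintegrand)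

end NonlocalForm

lemma inner_const_one_eq_integral {α : Type*} [MeasurableSpace α] {μ : Measure α}
    [IsFiniteMeasure μ] (u : Lp ℝ 2 μ) : inner ℝ (Lp.const 2 μ (1 : ℝ)) u = ∫ x, u x ∂μ := by
  rw [← indicatorConstLp_univ, L2.inner_indicatorConstLp_one, setIntegral_univ]

lemma lpRestrict_const_ne_zero {α : Type*} [MeasurableSpace α] {μ : Measure α} {s t : Set α}
    [IsFiniteMeasure (μ.restrict t)] (hst : s ⊆ t) (hs : μ s ≠ 0) {c : ℝ} (hc : c ≠ 0) :
    lpRestrict ℝ μ 2 hst (Lp.const 2 (μ.restrict t) c) ≠ 0 := by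
  rw [Ne, lpRestrict_eq_zero_iff]
  intro hzero
  have hfalse : ∀ᵐ _ ∂μ.restrict s, False := by
    filter_upwards [hzero, ae_restrict_of_ae_restrict_of_subset hst (Lp.coeFn_const 2 _ c)]
      with x hx hconst
    exact hc (hconst.symm.trans hx)
  rw [Filter.eventually_false_iff_eq_bot, ae_eq_bot, Measure.restrict_eq_zero] at hfalse
  exact hs hfalse

lemma isCoerciveOn_nonlocalForm_ker_lpRestrict {α : Type*} [MeasurableSpace α] {μ : Measure α}
    {s t : Set α} [IsFiniteMeasure (μ.restrict t)] (hst : s ⊆ t) (hs : μ s ≠ 0)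
    (γ : Lp ℝ ∞ ((μ.restrict t).prod (μ.restrict t))) {C : ℝ} (hC : 0 < C)
    (hpoincare : ∀ w : Lp ℝ 2 (μ.restrict t), ∫ x in t, w x ∂μ = 0 →
      C * ‖w‖ ^ 2 ≤ nonlocalForm γ w w) :
    IsCoerciveOn (nonlocalForm γ) (lpRestrict ℝ μ 2 hst).ker := by
  set e := Lp.const 2 (μ.restrict t) (1 : ℝ)
  have hTe : lpRestrict ℝ μ 2 hst e ≠ 0 := lpRestrict_const_ne_zero hst hs one_ne_zero
  have hmean : IsCoerciveOn (nonlocalForm γ) (innerSL ℝ e).ker :=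
    ⟨C, hC, fun w hw ↦ hpoincare w ((inner_const_one_eq_integral w).symm.trans hw)⟩
  have he : inner ℝ e e ≠ 0 := fun h ↦ hTe (by rw [inner_self_eq_zero.1 h, map_zero])
  exact hmean.ker_of_functional_ker (nonlocalForm_const_left γ 1)
    (nonlocalForm_const_right γ · 1) he hTe

theorem stmt10_general {α : Type*} [MeasurableSpace α] (μ : Measure α) {D Ω I : Set α}
    (hΩD : Ω ⊆ D) (hID : I ⊆ D) (hI : MeasurableSet I) (hD : μ D ≠ ∞) (hIpos : μ I ≠ 0)
    {γ : α → α → ℝ} (hγ : MemLp γ.uncurry ∞ ((μ.restrict D).prod (μ.restrict D)))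
    {C₀ : ℝ} (hC₀ : 0 < C₀)
    (hpoincare : ∀ w : Lp ℝ 2 (μ.restrict D), ∫ x in D, w x ∂μ = 0 →
      C₀ * ‖w‖ ^ 2 ≤ ∫ x in D, ∫ y in D, γ x y * (w x - w y) * (w x - w y) ∂μ ∂μ)
    {f : α → ℝ} (hf : MemLp f 2 (μ.restrict Ω)) :
    (∃! p : Lp ℝ 2 (μ.restrict D) × Lp ℝ 2 (μ.restrict I),
      (∀ v : Lp ℝ 2 (μ.restrict D),
        (∫ x in D, ∫ y in D, γ x y * (p.1 x - p.1 y) * (v x - v y) ∂μ ∂μ) +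
          ∫ x in I, p.2 x * v x ∂μ = ∫ x in Ω, v x * f x ∂μ) ∧
      ∀ ν : Lp ℝ 2 (μ.restrict I), ∫ x in I, p.1 x * ν x ∂μ = 0) ∧
    ∀ p : Lp ℝ 2 (μ.restrict D) × Lp ℝ 2 (μ.restrict I),
      ((∀ v : Lp ℝ 2 (μ.restrict D),
        (∫ x in D, ∫ y in D, γ x y * (p.1 x - p.1 y) * (v x - v y) ∂μ ∂μ) +
          ∫ x in I, p.2 x * v x ∂μ = ∫ x in Ω, v x * f x ∂μ) ∧
      ∀ ν : Lp ℝ 2 (μ.restrict I), ∫ x in I, p.1 x * ν x ∂μ = 0) →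
      ∀ᵐ x ∂μ.restrict I, p.1 x = 0 := by
  have : IsFiniteMeasure (μ.restrict D) := isFiniteMeasure_restrict.2 hD
  have hload (v : Lp ℝ 2 (μ.restrict D)) : ∫ x in Ω, v x * f x ∂μ =
      (innerSL ℝ (hf.toLp f)).comp (lpRestrict ℝ μ 2 hΩD) v := by
    rw [ContinuousLinearMap.comp_apply, innerSL_apply_apply, inner_lpRestrict]
    exact integral_congr_ae (hf.coeFn_toLp.mono fun x hx ↦ by simp only [hx, mul_comm])
  simp only [← nonlocalForm_toLp_apply hγ, ← inner_lpRestrict hID, hload,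
    ← lpRestrict_eq_zero_iff_forall_integral_eq_zero hID] at hpoincare ⊢
  have hcoercive := isCoerciveOn_nonlocalForm_ker_lpRestrict hID hIpos _ hC₀ hpoincare
  exact ⟨existsUnique_saddlePoint (B := nonlocalForm (hγ.toLp γ.uncurry))
      (lpRestrict_surjective hI hID) hcoercive _ 0,
    fun p hp ↦ (lpRestrict_eq_zero_iff hID p.1).1 hp.2⟩

theorem stmt10 {n : ℕ} (Ω ΩI : Set (EuclideanSpace ℝ (Fin n)))
    (hΩmeas : MeasurableSet Ω) (hΩImeas : MeasurableSet ΩI)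
    (hdisj : Disjoint Ω ΩI)
    (hΩbdd : Bornology.IsBounded Ω) (hΩIbdd : Bornology.IsBounded ΩI)
    (hΩpos : 0 < volume Ω) (hΩIpos : 0 < volume ΩI)
    (γ : EuclideanSpace ℝ (Fin n) → EuclideanSpace ℝ (Fin n) → ℝ)
    (hγmeas : Measurable fun p : EuclideanSpace ℝ (Fin n) × EuclideanSpace ℝ (Fin n) => γ p.1 p.2)
    (hγnonneg : ∀ x y, 0 ≤ γ x y)
    (hγbdd : ∃ M, ∀ x y, γ x y ≤ M)
    -- the nonlocal Poincaré inequality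
    (C₀ : ℝ) (hC₀ : 0 < C₀)
    (hpoincare : ∀ w : Lp ℝ 2 (volume.restrict (Ω ∪ ΩI)),
      (∫ x in Ω ∪ ΩI, w x) = 0 →
      aform (Ω ∪ ΩI) γ w w ≥ C₀ * ‖w‖ ^ 2)
    (f : EuclideanSpace ℝ (Fin n) → ℝ)
    (hf : MemLp f 2 (volume.restrict Ω)) :
    (∃! p : Lp ℝ 2 (volume.restrict (Ω ∪ ΩI)) × Lp ℝ 2 (volume.restrict ΩI),
      (∀ v : Lp ℝ 2 (volume.restrict (Ω ∪ ΩI)),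
        aform (Ω ∪ ΩI) γ p.1 v + (∫ x in ΩI, p.2 x * v x) = ∫ x in Ω, v x * f x) ∧
      (∀ ν : Lp ℝ 2 (volume.restrict ΩI), (∫ x in ΩI, p.1 x * ν x) = 0)) ∧
    -- moreover, any such solution `u` vanishes a.e. on `Ω_I`
    (∀ p : Lp ℝ 2 (volume.restrict (Ω ∪ ΩI)) × Lp ℝ 2 (volume.restrict ΩI),
      ((∀ v : Lp ℝ 2 (volume.restrict (Ω ∪ ΩI)),
        aform (Ω ∪ ΩI) γ p.1 v + (∫ x in ΩI, p.2 x * v x) = ∫ x in Ω, v x * f x) ∧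
      (∀ ν : Lp ℝ 2 (volume.restrict ΩI), (∫ x in ΩI, p.1 x * ν x) = 0)) →
      ∀ᵐ x ∂(volume.restrict ΩI), p.1 x = 0) := by
  obtain ⟨M, hM⟩ := hγbdd
  have hγ : MemLp γ.uncurry ∞
      ((volume.restrict (Ω ∪ ΩI)).prod (volume.restrict (Ω ∪ ΩI))) :=
    memLp_top_of_bound hγmeas.aestronglyMeasurable M
      (.of_forall fun z ↦ (Real.norm_of_nonneg (hγnonneg z.1 z.2)).trans_le (hM z.1 z.2))
  exact stmt10_general volume Set.subset_union_left Set.subset_union_right hΩImeas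
    (hΩbdd.union hΩIbdd).measure_lt_top.ne hΩIpos.ne' hγ hC₀ hpoincare hf
end
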